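/- arXiv:2204.08789 — 2 statements merged into one kernel-verified Lean document; each statement's English description precedes it below -/
import Mathlib

section
/- Fix $d > 0$ and for each integer $n \ge d$ let $M_n$ be a random variable with binomial distribution with $n(n-1)/2$ trials and success probability $d/n$, and let $\mu_n$ denote the law of $2M_n/n$. Define $\psi : \mathbb{R} \to [0,\infty]$ by $\psi(x) = \tfrac{1}{2}\big(x \log(x/d) - x + d\big)$ for $x > 0$, $\psi(0) = d/2$, and $\psi(x) = +\infty$ for $x < 0$. Then $\psi$ is a good rate function and $(\mu_n)$ satisfies a large deviation principle with speed $n$ and rate function $\psi$: for every closed set $F \subseteq \mathbb{R}$, $\limsup_{n\to\infty} \tfrac{1}{n} \log \mathbb{P}(2M_n/n \in F) \le -\inf_{x \in F} \psi(x)$, and for every open set $O \subseteq \mathbb{R}$, $\liminf_{n\to\infty} \tfrac{1}{n} \log \mathbb{P}(2M_n/n \in O) \ge -\inf_{x \in O} \psi(x)$. -/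
open MeasureTheory Filter
open scoped ENNReal

/-- The rate function `ψ(x) = (x log(x/d) - x + d)/2` for `x > 0`, `ψ(0) = d/2`,
`ψ(x) = ∞` for `x < 0`. -/
noncomputable def binomialRate (d : ℝ) (x : ℝ) : ℝ≥0∞ :=
  if x < 0 then ⊤
  else if x = 0 then ENNReal.ofReal (d / 2)
  else ENNReal.ofReal ((x * Real.log (x / d) - x + d) / 2)

/-!
In the sparse regime `p → 0`, `N p / n → r`, the law `Bin(N, p)` behaves on the exponential scale
like the Poisson law of mean `n r`. The exponential Chebyshev inequality with the optimal tilt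
bounds each point mass at `k` by `exp (-n I(k / n) + o(n))`, where `I` is the Cramér function of the
Poisson law of mean `r`. Since the support has only `exp (o(n))` points, a union bound gives the
upper bound. For the lower bound one point mass suffices: with `k / n → x`, Stirling's formula shows
that the Chernoff bound at `k` is sharp.
-/

section

open InformationTheory ProbabilityTheory Topology
open scoped unitInterval Nat

lemma map_apply_of_countable {α β : Type*} [Countable α] [MeasurableSpace α]
    [DiscreteMeasurableSpace α] [MeasurableSpace β] [MeasurableSingletonClass β]
    (μ : Measure α) (f : α → β) (s : Set β) : μ.map f s = μ (f ⁻¹' s) := by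
  have hf : Measurable f := .of_discrete
  refine le_antisymm ?_ (Measure.le_map_apply hf.aemeasurable s)
  -- Outside the countable range of `f` the set may be enlarged, which makes it measurable.
  have hmeas : MeasurableSet (s ∪ (Set.range f)ᶜ) := by
    have h : s ∪ (Set.range f)ᶜ = (Set.range f \ s)ᶜ := by
      rw [Set.sdiff_eq, Set.compl_inter, compl_compl, Set.union_comm]
    rw [h]
    exact ((Set.countable_range f).mono Set.sdiff_subset).measurableSet.compl
  calc μ.map f s ≤ μ.map f (s ∪ (Set.range f)ᶜ) := measure_mono Set.subset_union_left
    _ = μ (f ⁻¹' s) := by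
        rw [Measure.map_apply hf hmeas, Set.preimage_union, Set.preimage_compl,
          Set.preimage_range, Set.compl_univ, Set.union_empty]

/-- The Cramér rate function of the Poisson law of mean `r`, namely `x log (x / r) - x + r`, written
through `klFun` so that its analytic properties are inherited. It is meant for `0 < r` and `0 ≤ x`;
the value `∞` on `x < 0` is not encoded. -/
noncomputable def poissonRate (r x : ℝ) : ℝ := r * klFun (x / r)

lemma poissonRate_eq {r : ℝ} (hr : r ≠ 0) (x : ℝ) :
    poissonRate r x = x * Real.log (x / r) - x + r := by
  rw [poissonRate, klFun_apply]
  field_simp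
  ring

lemma poissonRate_nonneg {r x : ℝ} (hr : 0 ≤ r) (hx : 0 ≤ x) : 0 ≤ poissonRate r x :=
  mul_nonneg hr (klFun_nonneg (div_nonneg hx hr))

lemma poissonRate_mul_mul {t : ℝ} (ht : t ≠ 0) (r x : ℝ) :
    poissonRate (t * r) (t * x) = t * poissonRate r x := by
  rw [poissonRate, poissonRate, mul_div_mul_left _ _ ht, mul_assoc]

lemma continuous_poissonRate (r : ℝ) : Continuous (poissonRate r) :=
  continuous_const.mul (continuous_klFun.comp (continuous_id.div_const r))

lemma tendsto_poissonRate_atTop {r : ℝ} (hr : 0 < r) : Tendsto (poissonRate r) atTop atTop :=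
  (tendsto_klFun_atTop.comp (tendsto_id.atTop_div_const hr)).const_mul_atTop hr

lemma isCompact_poissonRate_le {r : ℝ} (hr : 0 < r) (c : ℝ) :
    IsCompact {x | 0 ≤ x ∧ poissonRate r x ≤ c} := by
  obtain ⟨b, hb⟩ := ((tendsto_poissonRate_atTop hr).eventually_gt_atTop c).exists_forall_of_atTop
  refine (isCompact_Icc (a := 0) (b := b)).of_isClosed_subset
    (isClosed_Ici.inter (isClosed_le (continuous_poissonRate r) continuous_const)) ?_
  rintro x ⟨hx0, hxc⟩
  exact ⟨hx0, le_of_not_ge fun hbx => (hb x hbx).not_ge hxc⟩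

lemma binomialRate_of_nonneg {d x : ℝ} (hd : d ≠ 0) (hx : 0 ≤ x) :
    binomialRate d x = ENNReal.ofReal (poissonRate (d / 2) (x / 2)) := by
  have hval : poissonRate (d / 2) (x / 2) = (x * Real.log (x / d) - x + d) / 2 := by
    rw [poissonRate_eq (div_ne_zero hd two_ne_zero), div_div_div_cancel_right₀ two_ne_zero]
    ring
  rw [binomialRate, if_neg hx.not_gt, hval]
  split_ifs with h0
  · simp [h0]
  · rfl

lemma coe_binomialRate_of_nonneg {d x : ℝ} (hd : 0 < d) (hx : 0 ≤ x) :
    (binomialRate d x : EReal) = (poissonRate (d / 2) (x / 2) : ℝ) := by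
  rw [binomialRate_of_nonneg hd.ne' hx, EReal.coe_ennreal_ofReal,
    max_eq_left (poissonRate_nonneg (by positivity) (by positivity))]

lemma isCompact_binomialRate_le {d : ℝ} (hd : 0 < d) {c : ℝ≥0∞} (hc : c ≠ ⊤) :
    IsCompact {x : ℝ | binomialRate d x ≤ c} := by
  have hpreimage : {x : ℝ | binomialRate d x ≤ c} =
      (fun x => x * 2⁻¹) ⁻¹' {y | 0 ≤ y ∧ poissonRate (d / 2) y ≤ c.toReal} := by
    ext x
    have hhalf : 0 ≤ x / 2 ↔ 0 ≤ x := by rw [le_div_iff₀ two_pos, zero_mul]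
    simp only [Set.mem_ofPred_eq, Set.mem_preimage, ← div_eq_mul_inv, hhalf]
    rcases lt_or_ge x 0 with hx | hx
    · simp [binomialRate, hx, hc, hx.not_ge]
    · simp [binomialRate_of_nonneg hd.ne' hx, ENNReal.ofReal_le_iff_le_toReal hc, hx]
  rw [hpreimage]
  exact (Homeomorph.mulRight₀ (2⁻¹ : ℝ) (by norm_num)).isCompact_preimage.2
    (isCompact_poissonRate_le (half_pos hd) _)

lemma factorial_le_exp_mul_sqrt_mul_pow {n : ℕ} (hn : n ≠ 0) :
    (n ! : ℝ) ≤ Real.exp 1 * √n * (n / Real.exp 1) ^ n := by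
  obtain ⟨m, rfl⟩ := Nat.exists_eq_succ_of_ne_zero hn
  have h := Stirling.stirlingSeq'_antitone (Nat.zero_le m)
  simp only [Function.comp_apply, Nat.succ_eq_add_one, zero_add, Stirling.stirlingSeq_one] at h
  rw [Stirling.stirlingSeq, div_le_iff₀ (by positivity)] at h
  refine h.trans_eq ?_
  rw [Real.sqrt_mul zero_le_two]
  field_simp

lemma log_factorial_le (n : ℕ) :
    Real.log (n !) ≤ n * Real.log n - n + Real.log (n + 1) + 1 := by
  rcases eq_or_ne n 0 with rfl | hn
  · simp
  have hn0 : (0 : ℝ) < n := by positivity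
  have hsqrt : Real.log √n ≤ Real.log (n + 1) :=
    Real.log_le_log (by positivity) (by rw [Real.sqrt_le_left (by positivity)]; nlinarith)
  have h := Real.log_le_log (by positivity) (factorial_le_exp_mul_sqrt_mul_pow hn)
  rw [Real.log_mul (by positivity) (by positivity), Real.log_mul (by positivity) (by positivity),
    Real.log_exp, Real.log_pow, Real.log_div hn0.ne' (by positivity), Real.log_exp] at h
  linarith

lemma mul_log_sub_log_factorial_le_log_choose {N k : ℕ} (hk : k ≤ N) :
    k * Real.log (N + 1 - k) - Real.log (k !) ≤ Real.log (N.choose k) := by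
  have hpos : (0 : ℝ) < N + 1 - k := by
    have : (k : ℝ) ≤ N := mod_cast hk
    linarith
  have h : ((N : ℝ) + 1 - k) ^ k / k ! ≤ N.choose k := by
    simpa [Nat.cast_sub (hk.trans N.le_succ)] using Nat.pow_le_choose (α := ℝ) k N
  rw [← Real.log_pow, ← Real.log_div (by positivity) (by positivity)]
  exact Real.log_le_log (by positivity) h

section PointMass

variable {N : ℕ} {p : I}

lemma binomial_real_singleton_mul_pow_le (k : ℕ) {y : ℝ} (hy : 0 ≤ y) :
    Bin(N, p).real {k} * y ^ k ≤ Real.exp (N * p * (y - 1)) := by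
  have hp0 : (0 : ℝ) ≤ p := p.2.1
  have hp1 : (0 : ℝ) ≤ 1 - p := sub_nonneg.2 p.2.2
  rw [binomial_real_singleton]
  rcases lt_or_ge N k with hk | hk
  · simp [Nat.choose_eq_zero_of_lt hk, Real.exp_nonneg]
  calc (N.choose k : ℝ) * p ^ k * (1 - p) ^ (N - k) * y ^ k
      = (p * y) ^ k * (1 - p) ^ (N - k) * N.choose k := by ring
    _ ≤ ∑ m ∈ Finset.range (N + 1), (p * y) ^ m * (1 - p : ℝ) ^ (N - m) * N.choose m :=
        Finset.single_le_sum (f := fun m => (p * y) ^ m * (1 - p : ℝ) ^ (N - m) * N.choose m)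
          (fun m _ => by positivity) (Finset.mem_range.2 (Nat.lt_succ_of_le hk))
    _ = (p * (y - 1) + 1) ^ N := by rw [← add_pow]; ring
    _ ≤ Real.exp (p * (y - 1)) ^ N :=
        pow_le_pow_left₀ (by nlinarith [mul_nonneg hp0 hy]) (Real.add_one_le_exp _) N
    _ = Real.exp (N * p * (y - 1)) := by rw [← Real.exp_nat_mul, mul_assoc]

lemma binomial_real_singleton_le_exp (k : ℕ) {r : ℝ} (hr : 0 < r) (hNp : (N * p : ℝ) ≤ r) :
    Bin(N, p).real {k} ≤ Real.exp (r - N * p - poissonRate r k) := by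
  have hpow : (k / r) ^ k = Real.exp (k * Real.log (k / r)) := by
    rcases eq_or_ne k 0 with rfl | hk
    · simp
    · rw [Real.exp_nat_mul, Real.exp_log (by positivity)]
  -- `k / r` is the tilt that turns the mean `r` of the dominating Poisson law into `k`.
  have htilt := binomial_real_singleton_mul_pow_le (N := N) (p := p) k (y := k / r) (by positivity)
  rw [hpow, ← le_div_iff₀ (Real.exp_pos _), ← Real.exp_sub] at htilt
  refine htilt.trans (Real.exp_le_exp.2 ?_)
  have hmul : (N * p * (k / r) : ℝ) ≤ k := by
    calc (N * p * (k / r) : ℝ) ≤ r * (k / r) := by gcongr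
      _ = k := by field_simp
  rw [poissonRate_eq hr.ne']
  linarith

lemma exp_le_binomial_real_singleton {k : ℕ} (hk : k ≤ N) (hp0 : 0 < p) (hp1 : p < 1) :
    Real.exp (k * Real.log ((N + 1 - k) * p) - k * Real.log k + k - Real.log (k + 1) - 1
      - N * p / (1 - p)) ≤ Bin(N, p).real {k} := by
  have hp : (0 : ℝ) < p := hp0
  have hq : (0 : ℝ) < 1 - p := sub_pos.2 hp1
  have hkN : (0 : ℝ) < N + 1 - k := by
    have : (k : ℝ) ≤ N := mod_cast hk
    linarith
  have hchoose : (0 : ℝ) < N.choose k := mod_cast Nat.choose_pos hk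
  have hfailures : -(N * p / (1 - p) : ℝ) ≤ (N - k : ℕ) * Real.log (1 - p) := by
    have hlog : -(p / (1 - p) : ℝ) ≤ Real.log (1 - p) := by
      refine le_of_eq_of_le ?_ (Real.one_sub_inv_le_log_of_pos hq)
      field_simp
      ring
    calc -(N * p / (1 - p) : ℝ) = N * -(p / (1 - p)) := by ring
      _ ≤ N * Real.log (1 - p) := by gcongr
      _ ≤ (N - k : ℕ) * Real.log (1 - p) :=
          mul_le_mul_of_nonpos_right (mod_cast Nat.sub_le N k)
            (Real.log_nonpos hq.le (by linarith))
  rw [binomial_real_singleton, ← Real.le_log_iff_exp_le (by positivity),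
    Real.log_mul hkN.ne' hp.ne', Real.log_mul (by positivity) (by positivity),
    Real.log_mul (by positivity) (by positivity), Real.log_pow, Real.log_pow]
  linarith [mul_log_sub_log_factorial_le_log_choose hk, log_factorial_le k]

lemma binomial_apply_le_card_mul {A : Set ℕ} {C : ℝ≥0∞} (hA : ∀ k ∈ A, Bin(N, p) {k} ≤ C) :
    Bin(N, p) A ≤ (N + 1 : ℕ) * C := by
  classical
  have hsupport : ∀ᵐ k ∂Bin(N, p), k ≤ N := ae_le_of_hasLaw_binomial (X := id) HasLaw.id
  calc Bin(N, p) A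
      ≤ Bin(N, p) (⋃ k ∈ {k ∈ Finset.range (N + 1) | k ∈ A}, {k}) := by
        refine measure_mono_ae ?_
        filter_upwards [hsupport] with k hkN hkA
        have hmem : k ∈ Finset.range (N + 1) ∧ k ∈ A :=
          ⟨Finset.mem_range.2 (Nat.lt_succ_of_le hkN), hkA⟩
        exact Set.mem_biUnion (Finset.mem_filter.2 hmem) rfl
    _ ≤ ∑ k ∈ Finset.range (N + 1) with k ∈ A, Bin(N, p) {k} := measure_biUnion_finset_le _ _
    _ ≤ (Finset.card {k ∈ Finset.range (N + 1) | k ∈ A}) • C :=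
        Finset.sum_le_card_nsmul _ _ _ fun k hk => hA k (Finset.mem_filter.1 hk).2
    _ ≤ (N + 1 : ℕ) * C := by
        rw [nsmul_eq_mul]
        gcongr
        exact (Finset.card_filter_le _ _).trans_eq (Finset.card_range _)

end PointMass

lemma inv_mul_log_ofReal_exp (n : ℕ) (b : ℝ) :
    (((n : ℝ)⁻¹ : ℝ) : EReal) * ENNReal.log (ENNReal.ofReal (Real.exp b)) = (b / n : ℝ) := by
  rw [ENNReal.log_ofReal_of_pos (Real.exp_pos _), Real.log_exp, ← EReal.coe_mul, inv_mul_eq_div]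

lemma monotone_inv_mul_log (n : ℕ) :
    Monotone fun a : ℝ≥0∞ => (((n : ℝ)⁻¹ : ℝ) : EReal) * ENNReal.log a := fun _ _ h =>
  mul_le_mul_of_nonneg_left (ENNReal.log_le_log h) (mod_cast inv_nonneg.2 n.cast_nonneg)

lemma limsup_inv_mul_log_le {P : ℕ → ℝ≥0∞} {b : ℕ → ℝ} {l : ℝ}
    (hP : ∀ᶠ n in atTop, P n ≤ ENNReal.ofReal (Real.exp (b n)))
    (hb : Tendsto (fun n => b n / n) atTop (𝓝 l)) :
    limsup (fun n : ℕ => (((n : ℝ)⁻¹ : ℝ) : EReal) * ENNReal.log (P n)) atTop ≤ l := by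
  rw [← ((continuous_coe_real_ereal.tendsto l).comp hb).limsup_eq]
  refine limsup_le_limsup ?_
  filter_upwards [hP] with n hn
  exact (monotone_inv_mul_log n hn).trans_eq (inv_mul_log_ofReal_exp n (b n))

lemma le_liminf_inv_mul_log {P : ℕ → ℝ≥0∞} {b : ℕ → ℝ} {l : ℝ}
    (hP : ∀ᶠ n in atTop, ENNReal.ofReal (Real.exp (b n)) ≤ P n)
    (hb : Tendsto (fun n => b n / n) atTop (𝓝 l)) :
    l ≤ liminf (fun n : ℕ => (((n : ℝ)⁻¹ : ℝ) : EReal) * ENNReal.log (P n)) atTop := by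
  rw [← ((continuous_coe_real_ereal.tendsto l).comp hb).liminf_eq]
  refine liminf_le_liminf ?_
  filter_upwards [hP] with n hn
  exact (inv_mul_log_ofReal_exp n (b n)).ge.trans (monotone_inv_mul_log n hn)

lemma tendsto_log_div_of_le_pow {u : ℕ → ℝ} (m : ℕ) (hone : ∀ᶠ n in atTop, 1 ≤ u n)
    (hle : ∀ᶠ n : ℕ in atTop, u n ≤ (n : ℝ) ^ m) :
    Tendsto (fun n : ℕ => Real.log (u n) / n) atTop (𝓝 0) := by
  have hlog : Tendsto (fun n : ℕ => m * (Real.log n / n)) atTop (𝓝 0) := by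
    simpa using ((Real.isLittleO_log_id_atTop.tendsto_div_nhds_zero).comp
      (tendsto_natCast_atTop_atTop (R := ℝ))).const_mul (m : ℝ)
  refine tendsto_of_tendsto_of_tendsto_of_le_of_le' tendsto_const_nhds hlog ?_ ?_
  · filter_upwards [hone] with n hn
    exact div_nonneg (Real.log_nonneg hn) n.cast_nonneg
  · filter_upwards [hone, hle] with n hn hn'
    rw [← mul_div_assoc, ← Real.log_pow]
    gcongr

section SparseRegime

variable {N : ℕ → ℕ} {p : ℕ → I} {r : ℝ}

lemma limsup_inv_mul_log_binomial_le (hr : 0 < r)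
    (hN : Tendsto (fun n => Real.log (N n + 1) / n) atTop (𝓝 0))
    (hNp : Tendsto (fun n => (N n * p n : ℝ) / n) atTop (𝓝 r))
    (hle : ∀ᶠ n : ℕ in atTop, (N n * p n : ℝ) ≤ n * r) {A : ℕ → Set ℕ} {c : ℝ}
    (hA : ∀ᶠ n : ℕ in atTop, ∀ k ∈ A n, c ≤ poissonRate r (k / n)) :
    limsup (fun n : ℕ => (((n : ℝ)⁻¹ : ℝ) : EReal) * ENNReal.log (Bin(N n, p n) (A n))) atTop
      ≤ (-c : ℝ) := by
  refine limsup_inv_mul_log_le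
    (b := fun n => Real.log (N n + 1) + (n * r - N n * p n - n * c)) ?_ ?_
  · filter_upwards [hle, hA, eventually_gt_atTop 0] with n hn hAn hn0
    have hn0' : (0 : ℝ) < n := mod_cast hn0
    have hpoint : ∀ k ∈ A n,
        Bin(N n, p n) {k} ≤ ENNReal.ofReal (Real.exp (n * r - N n * p n - n * c)) := by
      intro k hk
      rw [← ofReal_measureReal]
      have hchernoff := binomial_real_singleton_le_exp k (by positivity) hn
      refine ENNReal.ofReal_le_ofReal (hchernoff.trans (Real.exp_le_exp.2 ?_))
      have hscale := poissonRate_mul_mul hn0'.ne' r (k / n)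
      rw [mul_div_cancel₀ _ hn0'.ne'] at hscale
      rw [hscale]
      gcongr
      exact hAn k hk
    refine (binomial_apply_le_card_mul hpoint).trans_eq ?_
    rw [Real.exp_add, Real.exp_log (by positivity), ENNReal.ofReal_mul (by positivity)]
    norm_cast
  · have hlim := hN.add ((hNp.const_sub r).sub_const c)
    rw [show 0 + (r - r - c) = -c by ring] at hlim
    refine hlim.congr' ?_
    filter_upwards [eventually_gt_atTop 0] with n hn
    field_simp

variable {k : ℕ → ℕ} {x : ℝ}

lemma tendsto_log_binomial_lower_bound_div (hr : 0 < r)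
    (hNp : Tendsto (fun n => (N n * p n : ℝ) / n) atTop (𝓝 r))
    (hp : Tendsto (fun n => (p n : ℝ)) atTop (𝓝 0))
    (hk : Tendsto (fun n => (k n : ℝ) / n) atTop (𝓝 x)) :
    Tendsto (fun n => (k n * Real.log ((N n + 1 - k n) * p n) - k n * Real.log (k n) + k n
      - Real.log (k n + 1) - 1 - N n * p n / (1 - p n)) / n) atTop (𝓝 (-poissonRate r x)) := by
  have hinv : Tendsto (fun n : ℕ => (1 : ℝ) / n) atTop (𝓝 0) := tendsto_one_div_atTop_nhds_zero_nat
  have hmean : Tendsto (fun n => ((N n + 1 - k n) * p n : ℝ) / n) atTop (𝓝 r) := by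
    have h := (hNp.add (hinv.mul hp)).sub (hk.mul hp)
    simp only [mul_zero, add_zero, sub_zero] at h
    exact h.congr fun n => by ring
  have hlogk : Tendsto (fun n => Real.log (k n + 1) / n) atTop (𝓝 0) := by
    refine tendsto_log_div_of_le_pow 2 (.of_forall fun n => by simp) ?_
    filter_upwards [hk.eventually_lt_const (lt_add_one x), eventually_gt_atTop 0,
      tendsto_natCast_atTop_atTop.eventually_ge_atTop (x + 2)] with n hkn hn0 hxn
    have hn1 : (1 : ℝ) ≤ n := mod_cast hn0
    rw [div_lt_iff₀ (by positivity)] at hkn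
    nlinarith
  have hmain := (((((hk.mul (hmean.log hr.ne')).add
    ((Real.continuous_negMulLog.tendsto x).comp hk)).add hk).sub hlogk).sub hinv).sub
      (hNp.div (hp.const_sub 1) (by norm_num))
  have hvalue : x * Real.log r + Real.negMulLog x + x - 0 - 0 - r / (1 - 0) = -poissonRate r x := by
    rw [poissonRate_eq hr.ne', Real.negMulLog]
    rcases eq_or_ne x 0 with rfl | hx
    · simp
    · rw [Real.log_div hx hr.ne']
      ring
  rw [hvalue] at hmain
  refine hmain.congr' ?_
  filter_upwards [eventually_gt_atTop 0, hmean.eventually_const_lt hr] with n hn hpos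
  have hn0 : (n : ℝ) ≠ 0 := by positivity
  have hA : ((N n + 1 - k n) * p n : ℝ) ≠ 0 := fun h => by simp [h] at hpos
  have hentropy : (k n / n : ℝ) * Real.log ((N n + 1 - k n) * p n / n) + Real.negMulLog (k n / n) =
      k n / n * (Real.log ((N n + 1 - k n) * p n) - Real.log (k n)) := by
    rcases eq_or_ne (k n : ℝ) 0 with hk0 | hk0
    · simp [hk0]
    · rw [Real.negMulLog, Real.log_div hA hn0, Real.log_div hk0 hn0]
      ring
  simp only [Function.comp_apply, Pi.div_apply, hentropy]
  ring

lemma le_liminf_inv_mul_log_binomial (hr : 0 < r)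
    (hNp : Tendsto (fun n => (N n * p n : ℝ) / n) atTop (𝓝 r))
    (hp : Tendsto (fun n => (p n : ℝ)) atTop (𝓝 0))
    (hk : Tendsto (fun n => (k n : ℝ) / n) atTop (𝓝 x)) {A : ℕ → Set ℕ}
    (hA : ∀ᶠ n in atTop, k n ∈ A n) :
    (-poissonRate r x : ℝ) ≤
      liminf (fun n : ℕ => (((n : ℝ)⁻¹ : ℝ) : EReal) * ENNReal.log (Bin(N n, p n) (A n)))
        atTop := by
  refine le_liminf_inv_mul_log ?_ (tendsto_log_binomial_lower_bound_div hr hNp hp hk)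
  have hgap : Tendsto (fun n => (N n - k n : ℝ) * (p n / n)) atTop (𝓝 r) := by
    have h := hNp.sub (hk.mul hp)
    rw [mul_zero, sub_zero] at h
    exact h.congr fun n => by ring
  filter_upwards [hA, hgap.eventually_const_lt hr, hp.eventually_lt_const one_pos]
    with n hkA hgapn hp1
  have hp0 : (0 : ℝ) < p n := (p n).2.1.lt_of_ne' fun h => by simp [h] at hgapn
  have hkN : k n ≤ N n := by
    have h := pos_of_mul_pos_left hgapn (by positivity)
    exact_mod_cast (sub_pos.1 h).le
  calc _ ≤ ENNReal.ofReal (Bin(N n, p n).real {k n}) :=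
        ENNReal.ofReal_le_ofReal (exp_le_binomial_real_singleton hkN hp0 hp1)
    _ = Bin(N n, p n) {k n} := ofReal_measureReal
    _ ≤ Bin(N n, p n) (A n) := measure_mono (Set.singleton_subset_iff.2 hkA)

end SparseRegime

section EdgeCount

/-- The edge probability `d / n` of the sparse random graph on `n` vertices, clamped to `[0, 1]` so
that it is a legitimate parameter of `Bin` for every `n`. -/
noncomputable def edgeProb (d : ℝ) (n : ℕ) : I := Set.projIcc 0 1 zero_le_one (d / n)

variable {d : ℝ}

lemma coe_edgeProb {n : ℕ} (hd : 0 ≤ d) (hdn : d ≤ n) : (edgeProb d n : ℝ) = d / n := by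
  rw [edgeProb, Set.projIcc_of_mem _ ⟨by positivity, div_le_one_of_le₀ hdn n.cast_nonneg⟩]

lemma eventually_coe_edgeProb (hd : 0 ≤ d) :
    ∀ᶠ n : ℕ in atTop, (edgeProb d n : ℝ) = d / n := by
  filter_upwards [tendsto_natCast_atTop_atTop.eventually_ge_atTop d] with n hn
  exact coe_edgeProb hd hn

lemma cast_mul_pred_div_two (n : ℕ) : ((n * (n - 1) / 2 : ℕ) : ℝ) = n * (n - 1) / 2 := by
  rw [← Nat.choose_two_right, Nat.cast_choose_two]

lemma tendsto_edgeProb (hd : 0 ≤ d) : Tendsto (fun n => (edgeProb d n : ℝ)) atTop (𝓝 0) :=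
  (tendsto_const_div_atTop_nhds_zero_nat d).congr'
    ((eventually_coe_edgeProb hd).mono fun _ h => h.symm)

lemma eventually_mul_edgeProb (hd : 0 ≤ d) :
    ∀ᶠ n : ℕ in atTop,
      ((n * (n - 1) / 2 : ℕ) * edgeProb d n : ℝ) = n * (d / 2) - d / 2 := by
  filter_upwards [eventually_coe_edgeProb hd, eventually_gt_atTop 0] with n hn hn0
  rw [hn, cast_mul_pred_div_two]
  field_simp

lemma tendsto_mul_edgeProb_div (hd : 0 ≤ d) :
    Tendsto (fun n : ℕ => ((n * (n - 1) / 2 : ℕ) * edgeProb d n : ℝ) / n) atTop (𝓝 (d / 2)) := by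
  have h := (tendsto_const_div_atTop_nhds_zero_nat (d / 2)).const_sub (d / 2)
  rw [sub_zero] at h
  refine h.congr' ?_
  filter_upwards [eventually_mul_edgeProb hd, eventually_gt_atTop 0] with n hn hn0
  rw [hn]
  field_simp

lemma tendsto_log_mul_pred_div_two_div :
    Tendsto (fun n : ℕ => Real.log ((n * (n - 1) / 2 : ℕ) + 1) / n) atTop (𝓝 0) := by
  refine tendsto_log_div_of_le_pow 2 (.of_forall fun n => by simp) ?_
  filter_upwards [eventually_ge_atTop 1] with n hn
  have hn1 : (1 : ℝ) ≤ n := mod_cast hn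
  rw [cast_mul_pred_div_two]
  nlinarith

lemma limsup_inv_mul_log_edge_count_le (hd : 0 < d) (F : Set ℝ) :
    limsup (fun n : ℕ => (((n : ℝ)⁻¹ : ℝ) : EReal) * ENNReal.log
      (Bin(n * (n - 1) / 2, edgeProb d n) ((fun k : ℕ => 2 * (k : ℝ) / n) ⁻¹' F))) atTop
      ≤ -(⨅ x ∈ F, (binomialRate d x : EReal)) := by
  rw [EReal.le_neg, ← EReal.ge_of_forall_gt_iff_ge]
  intro c hc
  rw [EReal.le_neg, ← EReal.coe_neg]
  refine limsup_inv_mul_log_binomial_le (half_pos hd) tendsto_log_mul_pred_div_two_div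
    (tendsto_mul_edgeProb_div hd.le) ?_ (.of_forall fun n k hk => ?_)
  · filter_upwards [eventually_mul_edgeProb hd.le] with n hn
    linarith
  · have hlt : (c : EReal) < binomialRate d (2 * k / n) := hc.trans_le (iInf₂_le (2 * k / n : ℝ) hk)
    rw [coe_binomialRate_of_nonneg hd (by positivity), EReal.coe_lt_coe_iff] at hlt
    rw [show (k / n : ℝ) = 2 * k / n / 2 by ring]
    exact hlt.le

lemma le_liminf_inv_mul_log_edge_count (hd : 0 < d) {O : Set ℝ} (hO : IsOpen O) :
    -(⨅ x ∈ O, (binomialRate d x : EReal)) ≤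
      liminf (fun n : ℕ => (((n : ℝ)⁻¹ : ℝ) : EReal) * ENNReal.log
        (Bin(n * (n - 1) / 2, edgeProb d n) ((fun k : ℕ => 2 * (k : ℝ) / n) ⁻¹' O))) atTop := by
  rw [EReal.neg_le]
  refine le_iInf₂ fun x hx => ?_
  rcases lt_or_ge x 0 with hx0 | hx0
  · simp [binomialRate, hx0]
  rw [EReal.neg_le, coe_binomialRate_of_nonneg hd hx0, ← EReal.coe_neg]
  have hk : Tendsto (fun n : ℕ => (⌊x / 2 * n⌋₊ : ℝ) / n) atTop (𝓝 (x / 2)) :=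
    (tendsto_nat_floor_mul_div_atTop (by positivity)).comp tendsto_natCast_atTop_atTop
  refine le_liminf_inv_mul_log_binomial (half_pos hd) (tendsto_mul_edgeProb_div hd.le)
    (tendsto_edgeProb hd.le) hk ?_
  have hscaled : Tendsto (fun n : ℕ => 2 * (⌊x / 2 * n⌋₊ : ℝ) / n) atTop (𝓝 x) := by
    simpa only [mul_div_assoc, mul_div_cancel₀ x two_ne_zero] using hk.const_mul 2
  exact hscaled.eventually_mem (hO.mem_nhds hx)

end EdgeCount

theorem ldp_binomial_edge_count_general (d : ℝ) (hd : 0 < d) (ν : ℕ → Measure ℕ)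
    (hν : ∀ n : ℕ, d ≤ (n : ℝ) → ∀ k : ℕ,
      ν n {k} = ENNReal.ofReal (((n * (n - 1) / 2).choose k : ℝ) * (d / n) ^ k
        * (1 - d / n) ^ (n * (n - 1) / 2 - k))) :
    (∀ c : ℝ≥0∞, c ≠ ⊤ → IsCompact {x : ℝ | binomialRate d x ≤ c}) ∧
    (∀ F : Set ℝ,
      Filter.atTop.limsup (fun n : ℕ =>
          (((n : ℝ)⁻¹ : ℝ) : EReal)
            * ENNReal.log (Measure.map (fun k : ℕ => 2 * (k : ℝ) / n) (ν n) F))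
        ≤ -(⨅ x ∈ F, (binomialRate d x : EReal))) ∧
    (∀ O : Set ℝ, IsOpen O →
      -(⨅ x ∈ O, (binomialRate d x : EReal)) ≤
        Filter.atTop.liminf (fun n : ℕ =>
          (((n : ℝ)⁻¹ : ℝ) : EReal)
            * ENNReal.log (Measure.map (fun k : ℕ => 2 * (k : ℝ) / n) (ν n) O))) := by
  have hlaw : ∀ᶠ n : ℕ in atTop, ν n = Bin(n * (n - 1) / 2, edgeProb d n) := by
    filter_upwards [tendsto_natCast_atTop_atTop.eventually_ge_atTop d] with n hn
    refine Measure.ext_of_singleton fun k => ?_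
    rw [hν n hn, binomial_singleton, coe_edgeProb hd.le hn]
  simp only [map_apply_of_countable]
  refine ⟨fun c hc => isCompact_binomialRate_le hd hc, fun F => ?_, fun O hO => ?_⟩
  · refine le_of_eq_of_le (limsup_congr ?_) (limsup_inv_mul_log_edge_count_le hd F)
    filter_upwards [hlaw] with n hn
    rw [hn]
  · refine (le_liminf_inv_mul_log_edge_count hd hO).trans_eq (liminf_congr ?_)
    filter_upwards [hlaw] with n hn
    rw [hn]

end

/-- Let `M_n` be binomial with `n(n-1)/2` trials and success probability `d/n`.  Then `ψ` is a
good rate function and the laws of `2 M_n / n` satisfy a large deviation principle with speed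
`n` and rate function `ψ`. -/
theorem ldp_binomial_edge_count (d : ℝ) (hd : 0 < d)
    (ν : ℕ → Measure ℕ) (hprob : ∀ n, IsProbabilityMeasure (ν n))
    (hν : ∀ n : ℕ, d ≤ (n : ℝ) → ∀ k : ℕ,
      ν n {k} = ENNReal.ofReal (((n * (n - 1) / 2).choose k : ℝ) * (d / n) ^ k
        * (1 - d / n) ^ (n * (n - 1) / 2 - k))) :
    (∀ c : ℝ≥0∞, c ≠ ⊤ → IsCompact {x : ℝ | binomialRate d x ≤ c}) ∧
    (∀ F : Set ℝ, IsClosed F →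
      Filter.atTop.limsup (fun n : ℕ =>
          (((n : ℝ)⁻¹ : ℝ) : EReal)
            * ENNReal.log (Measure.map (fun k : ℕ => 2 * (k : ℝ) / n) (ν n) F))
        ≤ -(⨅ x ∈ F, (binomialRate d x : EReal))) ∧
    (∀ O : Set ℝ, IsOpen O →
      -(⨅ x ∈ O, (binomialRate d x : EReal)) ≤
        Filter.atTop.liminf (fun n : ℕ =>
          (((n : ℝ)⁻¹ : ℝ) : EReal)
            * ENNReal.log (Measure.map (fun k : ℕ => 2 * (k : ℝ) / n) (ν n) O))) := by
  have h := ldp_binomial_edge_count_general d hd ν hν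
  exact ⟨h.1, fun F _ => h.2.1 F, h.2.2⟩
end

section
/- Let $\delta : [0,1] \to [0,\infty)$ be a continuous monotone increasing function with $\delta(0) = 0$, let $\varepsilon > 0$, and let $h$ be a positive integer. Then there exists a constant $C = C(\delta,\varepsilon,h) > 0$ such that for every $n$ and every simple graph $H$ on vertex set $\{1,\dots,n\}$ satisfying $\sum_{v \in U} \deg_H(v) \le n\, \delta(|U|/n)$ for every subset $U \subseteq \{1,\dots,n\}$, the number of vertices $v$ whose $h$-ball $B_H(v,h) = \{u : u \text{ is connected to } v \text{ in } H \text{ and } \mathrm{dist}_H(v,u) \le h\}$ has cardinality $|B_H(v,h)| > C$ is at most $\varepsilon n$. -/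
/-!
A vertex whose ball of radius `r + 1` has more than `1 + D * C` elements either has degree more
than `D` or has a neighbour whose ball of radius `r` has more than `C` elements. Small vertex sets
have small degree sum, so few vertices have large degree, and the few vertices with a large ball of
radius `r` have few neighbours. Induct on the radius.
-/

open Filter Topology

/-- The function `δ` controls the degree sums of `G`: a set of vertices of density `x` has degree
sum at most `δ x` times the number of vertices. This is the sparsity hypothesis on `G`; degrees are
counted by `Nat.card`, so that no decidability of adjacency is involved. -/
def HasDegreeModulus {V : Type*} (G : SimpleGraph V) (δ : ℝ → ℝ) : Prop :=
  ∀ U : Finset V,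
    ∑ v ∈ U, (Nat.card (G.neighborSet v) : ℝ) ≤ Nat.card V * δ (U.card / Nat.card V)

section Graph

variable {V : Type*} {G : SimpleGraph V}

-- `G.ball` is the open ball, so radius `h + 1` gives the closed ball of radius `h`.
theorem mem_ball_natCast_add_one_iff {u v : V} {h : ℕ} :
    u ∈ G.ball v (h + 1) ↔ G.Reachable v u ∧ G.dist v u ≤ h := by
  rw [SimpleGraph.mem_ball_comm, SimpleGraph.mem_ball, ENat.lt_natCast_add_one_iff]
  constructor
  · intro hdist
    have hvu : G.Reachable v u :=
      SimpleGraph.reachable_of_edist_ne_top (hdist.trans_lt (ENat.natCast_lt_top h)).ne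
    exact ⟨hvu, by exact_mod_cast hvu.coe_dist_eq_edist.trans_le hdist⟩
  · rintro ⟨hvu, hdist⟩
    exact hvu.coe_dist_eq_edist.symm.trans_le (by exact_mod_cast hdist)

theorem ball_add_one_subset (v : V) (r : ℕ∞) :
    G.ball v (r + 1) ⊆ insert v (⋃ w ∈ G.neighborSet v, G.ball w r) := by
  intro u hu
  rw [SimpleGraph.mem_ball_comm, SimpleGraph.mem_ball] at hu
  obtain ⟨p, hp⟩ := SimpleGraph.exists_walk_of_edist_ne_top hu.ne_top
  cases p with
  | nil => exact Set.mem_insert _ _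
  | @cons _ w _ hvw q =>
    rw [← hp, SimpleGraph.Walk.length_cons, Nat.cast_add, Nat.cast_one] at hu
    have huw : u ∈ G.ball w r := by
      rw [SimpleGraph.mem_ball_comm, SimpleGraph.mem_ball]
      exact (SimpleGraph.edist_le q).trans_lt (lt_of_add_lt_add_right hu)
    exact Set.mem_insert_of_mem _ (Set.mem_biUnion hvw huw)

theorem ncard_biUnion_neighborSet_le_sum_degree (S : Finset V) :
    (⋃ w ∈ S, G.neighborSet w).ncard ≤ ∑ w ∈ S, Nat.card (G.neighborSet w) := by
  simpa only [Nat.card_coe_set_eq] using S.set_ncard_biUnion_le G.neighborSet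

variable [Finite V]

theorem ncard_ball_add_one_le {v : V} {r : ℕ∞} {C D : ℕ} (hdeg : Nat.card (G.neighborSet v) ≤ D)
    (hball : ∀ w ∈ G.neighborSet v, (G.ball w r).ncard ≤ C) :
    (G.ball v (r + 1)).ncard ≤ 1 + D * C := by
  classical
  have := Fintype.ofFinite V
  have hunion : (⋃ w ∈ G.neighborSet v, G.ball w r).ncard ≤ D * C :=
    calc (⋃ w ∈ G.neighborSet v, G.ball w r).ncard
        = (⋃ w ∈ G.neighborFinset v, G.ball w r).ncard := by
          simp only [SimpleGraph.mem_neighborSet, SimpleGraph.mem_neighborFinset]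
      _ ≤ ∑ w ∈ G.neighborFinset v, (G.ball w r).ncard := Finset.set_ncard_biUnion_le _ _
      _ ≤ (G.neighborFinset v).card * C :=
          Finset.sum_le_card_nsmul _ _ _ fun w hw ↦ hball w ((G.mem_neighborFinset v w).1 hw)
      _ ≤ D * C := by
          rw [Nat.card_eq_card_toFinset] at hdeg
          exact Nat.mul_le_mul_right C hdeg
  calc (G.ball v (r + 1)).ncard
      ≤ (insert v (⋃ w ∈ G.neighborSet v, G.ball w r)).ncard :=
        Set.ncard_le_ncard (ball_add_one_subset v r)
    _ ≤ (⋃ w ∈ G.neighborSet v, G.ball w r).ncard + 1 := Set.ncard_insert_le _ _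
    _ ≤ 1 + D * C := by omega

theorem setOf_lt_ncard_ball_add_one_subset (r : ℕ∞) (C D : ℕ) :
    {v | 1 + D * C < (G.ball v (r + 1)).ncard} ⊆
      {v | D < Nat.card (G.neighborSet v)} ∪
        ⋃ w ∈ {w | C < (G.ball w r).ncard}, G.neighborSet w := by
  intro v hv
  by_contra hcon
  obtain ⟨hdeg, hnbr⟩ := not_or.1 hcon
  refine (ncard_ball_add_one_le (not_lt.1 hdeg) fun w hvw ↦ ?_).not_gt hv
  exact not_lt.1 fun hw ↦ hnbr (Set.mem_biUnion hw (G.adj_symm hvw))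

-- A set of vertices of degree more than `D ≥ 2 / t` with size between `t * |V| / 2` and `t * |V|`
-- would have degree sum more than `|V|`. An integer lies in that range because `|V| > D` as soon
-- as some degree exceeds `D`.
theorem ncard_setOf_lt_degree_le {t : ℝ} (ht : 0 < t) {D : ℕ} (hD : 2 / t ≤ D)
    (hsum : ∀ U : Finset V, (U.card : ℝ) ≤ t * Nat.card V →
      ∑ v ∈ U, (Nat.card (G.neighborSet v) : ℝ) ≤ Nat.card V) :
    ({v | D < Nat.card (G.neighborSet v)}.ncard : ℝ) ≤ t / 2 * Nat.card V := by
  classical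
  have := Fintype.ofFinite V
  by_contra! hlarge
  rw [Set.ncard_eq_toFinset_card'] at hlarge
  obtain ⟨U, hUsub, hUcard⟩ := Finset.exists_subset_card_eq
    (Nat.succ_le_of_lt ((Nat.floor_lt (by positivity)).2 hlarge))
  have hUdeg : ∀ v ∈ U, D < Nat.card (G.neighborSet v) := fun v hv ↦ by simpa using hUsub hv
  have hU : U.Nonempty := Finset.card_pos.1 (by omega)
  have hUlower : t / 2 * Nat.card V < U.card := by
    simpa only [hUcard, Nat.cast_succ] using Nat.lt_floor_add_one (t / 2 * Nat.card V)
  have hUupper : (U.card : ℝ) ≤ t * Nat.card V := by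
    obtain ⟨v, hv⟩ := hU
    have hDV : (D : ℝ) ≤ Nat.card V := by
      exact_mod_cast (hUdeg v hv).le.trans (Finite.card_subtype_le _)
    have htV : 2 ≤ Nat.card V * t := (div_le_iff₀ ht).1 (hD.trans hDV)
    have hfloor := Nat.floor_le (by positivity : 0 ≤ t / 2 * Nat.card V)
    rw [hUcard, Nat.cast_succ]
    linarith
  refine (hsum U hUupper).not_gt ?_
  calc (Nat.card V : ℝ)
      = t / 2 * Nat.card V * (2 / t) := by field_simp
    _ < U.card * (2 / t) := by gcongr
    _ ≤ U.card * D := by gcongr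
    _ = ∑ _v ∈ U, (D : ℝ) := by rw [Finset.sum_const, nsmul_eq_mul]
    _ ≤ ∑ v ∈ U, (Nat.card (G.neighborSet v) : ℝ) :=
      Finset.sum_le_sum fun v hv ↦ by exact_mod_cast (hUdeg v hv).le

theorem HasDegreeModulus.sum_degree_le {δ : ℝ → ℝ} (hG : HasDegreeModulus G δ) {t η : ℝ}
    (hη : 0 ≤ η) (hδ : ∀ x ∈ Set.Ioc 0 t, δ x ≤ η) {U : Finset V}
    (hU : (U.card : ℝ) ≤ t * Nat.card V) :
    ∑ v ∈ U, (Nat.card (G.neighborSet v) : ℝ) ≤ η * Nat.card V := by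
  rcases U.eq_empty_or_nonempty with rfl | hne
  · rw [Finset.sum_empty]
    positivity
  have : Nonempty V := hne.to_type
  have hV : (0 : ℝ) < Nat.card V := by exact_mod_cast Nat.card_pos
  have hcard : (0 : ℝ) < U.card := by exact_mod_cast hne.card_pos
  calc ∑ v ∈ U, (Nat.card (G.neighborSet v) : ℝ)
      ≤ Nat.card V * δ (U.card / Nat.card V) := hG U
    _ ≤ Nat.card V * η := by
      gcongr
      exact hδ _ ⟨div_pos hcard hV, (div_le_iff₀ hV).2 hU⟩
    _ = η * Nat.card V := mul_comm _ _

theorem HasDegreeModulus.ncard_biUnion_neighborSet_le {δ : ℝ → ℝ} (hG : HasDegreeModulus G δ)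
    {t η : ℝ} (hη : 0 ≤ η) (hδ : ∀ x ∈ Set.Ioc 0 t, δ x ≤ η) {S : Set V}
    (hS : (S.ncard : ℝ) ≤ t * Nat.card V) :
    ((⋃ w ∈ S, G.neighborSet w).ncard : ℝ) ≤ η * Nat.card V := by
  lift S to Finset V using S.toFinite
  rw [Set.ncard_coe_finset] at hS
  refine le_trans ?_ (hG.sum_degree_le hη hδ hS)
  exact_mod_cast ncard_biUnion_neighborSet_le_sum_degree S

end Graph

theorem exists_forall_mem_Ioc_le_of_tendsto_zero {δ : ℝ → ℝ} (hδ : Tendsto δ (𝓝[>] 0) (𝓝 0))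
    {η : ℝ} (hη : 0 < η) : ∃ t > 0, ∀ x ∈ Set.Ioc 0 t, δ x ≤ η :=
  mem_nhdsGT_iff_exists_Ioc_subset.1 (hδ.eventually_le_const hη)

universe u

theorem exists_forall_ncard_setOf_lt_ncard_ball_le {δ : ℝ → ℝ} (hδ : Tendsto δ (𝓝[>] 0) (𝓝 0))
    (r : ℕ) {ε : ℝ} (hε : 0 < ε) :
    ∃ C : ℕ, ∀ (V : Type u) [Finite V] (G : SimpleGraph V), HasDegreeModulus G δ →
      ({v | C < (G.ball v r).ncard}.ncard : ℝ) ≤ ε * Nat.card V := by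
  induction r generalizing ε with
  | zero =>
    refine ⟨0, fun V _ G _ ↦ ?_⟩
    simp only [Nat.cast_zero, SimpleGraph.ball_zero, Set.ncard_empty, lt_self_iff_false]
    simpa using by positivity
  | succ r ih =>
    obtain ⟨s, hs, hδs⟩ := exists_forall_mem_Ioc_le_of_tendsto_zero hδ (half_pos hε)
    obtain ⟨t, ht, hδt⟩ := exists_forall_mem_Ioc_le_of_tendsto_zero hδ one_pos
    obtain ⟨C, hC⟩ := ih hs
    set D : ℕ := ⌈2 / min t ε⌉₊
    refine ⟨1 + D * C, fun V _ G hG ↦ ?_⟩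
    set A : Set V := {v | D < Nat.card (G.neighborSet v)}
    set N : Set V := ⋃ w ∈ {w | C < (G.ball w r).ncard}, G.neighborSet w
    have hA : (A.ncard : ℝ) ≤ ε / 2 * Nat.card V := by
      refine (ncard_setOf_lt_degree_le (lt_min ht hε) (Nat.le_ceil _) fun U hU ↦ ?_).trans ?_
      · simpa only [one_mul] using hG.sum_degree_le zero_le_one
          (fun x hx ↦ hδt x ⟨hx.1, hx.2.trans (min_le_left t ε)⟩) hU
      · gcongr
        exact min_le_right t ε
    have hN : (N.ncard : ℝ) ≤ ε / 2 * Nat.card V :=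
      hG.ncard_biUnion_neighborSet_le (half_pos hε).le hδs (hC V G hG)
    have hcover : ({v | 1 + D * C < (G.ball v ↑(r + 1)).ncard}.ncard : ℝ) ≤ A.ncard + N.ncard := by
      exact_mod_cast (Set.ncard_le_ncard (setOf_lt_ncard_ball_add_one_subset (r : ℕ∞) C D)).trans
        (Set.ncard_union_le A N)
    linarith

theorem few_vertices_with_large_balls_general {δ : ℝ → ℝ} (hδ : Tendsto δ (𝓝[>] 0) (𝓝 0))
    {ε : ℝ} (hε : 0 < ε) (h : ℕ) :
    ∃ C : ℝ, 0 < C ∧ ∀ (V : Type u) [Finite V] (G : SimpleGraph V), HasDegreeModulus G δ →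
      (Nat.card {v : V | C < (Nat.card {u : V | G.Reachable v u ∧ G.dist v u ≤ h} : ℝ)} : ℝ)
        ≤ ε * Nat.card V := by
  obtain ⟨C, hC⟩ := exists_forall_ncard_setOf_lt_ncard_ball_le hδ (h + 1) hε
  refine ⟨C + 1, by positivity, fun V _ G hG ↦ le_trans ?_ (hC V G hG)⟩
  rw [Nat.card_coe_set_eq, Nat.cast_le]
  refine Set.ncard_le_ncard fun v hv ↦ ?_
  have hball : G.ball v ↑(h + 1) = {u | G.Reachable v u ∧ G.dist v u ≤ h} :=
    Set.ext fun _ ↦ mem_ball_natCast_add_one_iff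
  have hlt : (C : ℝ) + 1 < (G.ball v ↑(h + 1)).ncard := by
    rwa [hball, ← Nat.card_coe_set_eq]
  exact_mod_cast (lt_add_one (C : ℝ)).trans hlt

/-- If a graph `H` on `n` vertices satisfies `∑_{v ∈ U} deg_H(v) ≤ n δ(|U|/n)` for all vertex
subsets `U`, where `δ : [0,1] → [0,∞)` is continuous, monotone increasing, with `δ(0) = 0`,
then for every `ε > 0` and positive integer `h` there is `C > 0` (depending only on
`δ, ε, h`) such that at most `ε n` vertices have `h`-ball of cardinality greater than `C`. -/
theorem few_vertices_with_large_balls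
    (δ : ℝ → ℝ)
    (hδc : ContinuousOn δ (Set.Icc 0 1))
    (hδm : MonotoneOn δ (Set.Icc 0 1))
    (hδ0 : δ 0 = 0)
    (hδnn : ∀ x ∈ Set.Icc (0 : ℝ) 1, 0 ≤ δ x)
    (ε : ℝ) (hε : 0 < ε) (h : ℕ) (hh : 0 < h) :
    ∃ C : ℝ, 0 < C ∧ ∀ (n : ℕ) (G : SimpleGraph (Fin n)),
      (∀ U : Finset (Fin n),
        (∑ v ∈ U, (Nat.card (G.neighborSet v) : ℝ)) ≤ n * δ (U.card / n)) →
      (Nat.card {v : Fin n |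
          C < (Nat.card {u : Fin n | G.Reachable v u ∧ G.dist v u ≤ h} : ℝ)} : ℝ)
        ≤ ε * n := by
  have hδ : Tendsto δ (𝓝[>] 0) (𝓝 0) := by
    simpa only [ContinuousWithinAt, hδ0, nhdsWithin_Ioc_eq_nhdsGT one_pos] using
      (hδc 0 (Set.left_mem_Icc.2 zero_le_one)).mono Set.Ioc_subset_Icc_self
  obtain ⟨C, hC, hfew⟩ := few_vertices_with_large_balls_general hδ hε h
  refine ⟨C, hC, fun n G hG ↦ ?_⟩
  simpa only [Nat.card_fin] using
    hfew (Fin n) G (by simpa only [HasDegreeModulus, Nat.card_fin] using hG)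
end
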